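/- If the pairs f = (u₁, v₁) and g = (u₂, v₂) on Ω are S-continuous, then their pointwise interval product f × g = (m, M), where m(x) = min{u₁(x)u₂(x), u₁(x)v₂(x), v₁(x)u₂(x), v₁(x)v₂(x)} and M(x) = max{u₁(x)u₂(x), u₁(x)v₂(x), v₁(x)u₂(x), v₁(x)v₂(x)}, is S-continuous. -/

import Mathlib

open Set

/-- Points of `ℝⁿ`. -/
abbrev Pt (n : ℕ) := EuclideanSpace ℝ (Fin n)

/-- Lower Baire operator `I(D,Ω,f)(x) = sup_{δ>0} inf { f y : y ∈ B_δ(x) ∩ D }`,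
where `B_δ(x) = { y ∈ Ω : ‖y - x‖ < δ }`. -/
noncomputable def Ilow {n : ℕ} (D Om : Set (Pt n)) (f : Pt n → ℝ) (x : Pt n) : ℝ :=
  sSup {a : ℝ | ∃ δ : ℝ, 0 < δ ∧
    a = sInf (f '' {y | y ∈ Om ∧ ‖y - x‖ < δ ∧ y ∈ D})}

/-- Upper Baire operator `S(D,Ω,f)(x) = inf_{δ>0} sup { f y : y ∈ B_δ(x) ∩ D }`. -/
noncomputable def Shigh {n : ℕ} (D Om : Set (Pt n)) (f : Pt n → ℝ) (x : Pt n) : ℝ :=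
  sInf {a : ℝ | ∃ δ : ℝ, 0 < δ ∧
    a = sSup (f '' {y | y ∈ Om ∧ ‖y - x‖ < δ ∧ y ∈ D})}

/-- `f`, defined on `D ⊆ Ω`, is locally bounded relative to `Ω`. -/
def LocBddOn {n : ℕ} (Om D : Set (Pt n)) (f : Pt n → ℝ) : Prop :=
  ∀ x ∈ Om, ∃ δ : ℝ, 0 < δ ∧ ∃ M : ℝ,
    ∀ y, y ∈ Om → ‖y - x‖ < δ → y ∈ D → |f y| < M

/-- `(u, v)` encodes an interval-valued function `x ↦ [u x, v x]` on `Om`. -/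
def IntervalPair {n : ℕ} (Om : Set (Pt n)) (u v : Pt n → ℝ) : Prop :=
  LocBddOn Om Om u ∧ LocBddOn Om Om v ∧ ∀ x ∈ Om, u x ≤ v x

/-- The pair `(u, v)` is S-continuous on `Om`: `I(u) = u` and `S(v) = v`. -/
def SCont {n : ℕ} (Om : Set (Pt n)) (u v : Pt n → ℝ) : Prop :=
  ∀ x ∈ Om, Ilow Om Om u x = u x ∧ Shigh Om Om v x = v x

/-- The pair `(u, v)` is Hausdorff continuous on `Om`. -/
def HCont {n : ℕ} (Om : Set (Pt n)) (u v : Pt n → ℝ) : Prop :=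
  ∀ p q : Pt n → ℝ, LocBddOn Om Om p → LocBddOn Om Om q →
    (∀ x ∈ Om, u x ≤ p x ∧ p x ≤ q x ∧ q x ≤ v x) →
    ∀ x ∈ Om, Ilow Om Om p x = u x ∧ Shigh Om Om q x = v x

/-- `(u, v)` is an H-continuous interval pair on `Om`. -/
def HContPair {n : ℕ} (Om : Set (Pt n)) (u v : Pt n → ℝ) : Prop :=
  IntervalPair Om u v ∧ HCont Om u v

/-- Lower endpoint of the pointwise interval product. -/
noncomputable def imin {n : ℕ} (u₁ v₁ u₂ v₂ : Pt n → ℝ) (x : Pt n) : ℝ :=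
  min (min (u₁ x * u₂ x) (u₁ x * v₂ x)) (min (v₁ x * u₂ x) (v₁ x * v₂ x))

/-- Upper endpoint of the pointwise interval product. -/
noncomputable def imax {n : ℕ} (u₁ v₁ u₂ v₂ : Pt n → ℝ) (x : Pt n) : ℝ :=
  max (max (u₁ x * u₂ x) (u₁ x * v₂ x)) (max (v₁ x * u₂ x) (v₁ x * v₂ x))

/-- `(pl, pu)` is the H-continuous pair contained pointwise in the interval sum of
`(u₁, v₁)` and `(u₂, v₂)`, i.e. `(pl, pu) = (u₁,v₁) ⊕ (u₂,v₂)`. -/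
def IsOplus {n : ℕ} (Om : Set (Pt n)) (u₁ v₁ u₂ v₂ pl pu : Pt n → ℝ) : Prop :=
  HContPair Om pl pu ∧
    ∀ x ∈ Om, u₁ x + u₂ x ≤ pl x ∧ pl x ≤ pu x ∧ pu x ≤ v₁ x + v₂ x

/-- `(ql, qu)` is the H-continuous pair contained pointwise in the interval product of
`(u₁, v₁)` and `(u₂, v₂)`, i.e. `(ql, qu) = (u₁,v₁) ⊗ (u₂,v₂)`. -/
def IsOtimes {n : ℕ} (Om : Set (Pt n)) (u₁ v₁ u₂ v₂ ql qu : Pt n → ℝ) : Prop :=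
  HContPair Om ql qu ∧
    ∀ x ∈ Om, imin u₁ v₁ u₂ v₂ x ≤ ql x ∧ ql x ≤ qu x ∧ qu x ≤ imax u₁ v₁ u₂ v₂ x

/-!
The lower Baire operator fixes `u` exactly when `u` is lower semicontinuous and bounded below on
bounded sets, and dually for the upper one. The lower endpoint of the product of two intervals is
continuous in the four endpoints and can only grow when the intervals shrink; hence it turns lower
semicontinuous lower endpoints and upper semicontinuous upper endpoints into a lower semicontinuous
function. The upper endpoint follows from `-(f × g) = (-f) × g`.
-/

open Filter Metric Topology Bornology

section IntervalProduct

variable {R : Type*}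

/-- Lower endpoint of the product of the intervals `[p, q]` and `[r, s]`. -/
def mulLower [Mul R] [LinearOrder R] (p q r s : R) : R :=
  min (min (p * r) (p * s)) (min (q * r) (q * s))

/-- Upper endpoint of the product of the intervals `[p, q]` and `[r, s]`. -/
def mulUpper [Mul R] [LinearOrder R] (p q r s : R) : R :=
  max (max (p * r) (p * s)) (max (q * r) (q * s))

variable [Ring R] [LinearOrder R] [IsOrderedRing R] {p q r s p' q' r' s' a b : R}

theorem mulLower_neg_neg (p q r s : R) : mulLower (-q) (-p) r s = -mulUpper p q r s := by
  simp only [mulLower, mulUpper, neg_mul, min_neg_neg]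
  rw [max_comm]

theorem min_mul_left_le_mul (hr : r ≤ b) (hs : b ≤ s) : min (a * r) (a * s) ≤ a * b := by
  rcases le_total 0 a with ha | ha
  · exact min_le_of_left_le (mul_le_mul_of_nonneg_left hr ha)
  · exact min_le_of_right_le (mul_le_mul_of_nonpos_left hs ha)

theorem min_mul_right_le_mul (hp : p ≤ a) (hq : a ≤ q) : min (p * b) (q * b) ≤ a * b := by
  rcases le_total 0 b with hb | hb
  · exact min_le_of_left_le (mul_le_mul_of_nonneg_right hp hb)
  · exact min_le_of_right_le (mul_le_mul_of_nonpos_right hq hb)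

theorem mulLower_le_mul (hp : p ≤ a) (hq : a ≤ q) (hr : r ≤ b) (hs : b ≤ s) :
    mulLower p q r s ≤ a * b :=
  calc mulLower p q r s ≤ min (p * b) (q * b) :=
        min_le_min (min_mul_left_le_mul hr hs) (min_mul_left_le_mul hr hs)
    _ ≤ a * b := min_mul_right_le_mul hp hq

theorem mulLower_le_mulLower (hp : p ≤ p') (hpq : p' ≤ q') (hq : q' ≤ q)
    (hr : r ≤ r') (hrs : r' ≤ s') (hs : s' ≤ s) :
    mulLower p q r s ≤ mulLower p' q' r' s' :=
  le_min
    (le_min (mulLower_le_mul hp (hpq.trans hq) hr (hrs.trans hs))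
      (mulLower_le_mul hp (hpq.trans hq) (hr.trans hrs) hs))
    (le_min (mulLower_le_mul (hp.trans hpq) hq hr (hrs.trans hs))
      (mulLower_le_mul (hp.trans hpq) hq (hr.trans hrs) hs))

theorem bddBelow_image_mulLower {X : Type*} {u₁ v₁ u₂ v₂ : X → R} {t : Set X}
    (hu₁ : BddBelow (u₁ '' t)) (hv₁ : BddAbove (v₁ '' t))
    (hu₂ : BddBelow (u₂ '' t)) (hv₂ : BddAbove (v₂ '' t))
    (h₁ : ∀ x ∈ t, u₁ x ≤ v₁ x) (h₂ : ∀ x ∈ t, u₂ x ≤ v₂ x) :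
    BddBelow ((fun x => mulLower (u₁ x) (v₁ x) (u₂ x) (v₂ x)) '' t) := by
  obtain ⟨p, hp⟩ := hu₁
  obtain ⟨q, hq⟩ := hv₁
  obtain ⟨r, hr⟩ := hu₂
  obtain ⟨s, hs⟩ := hv₂
  refine ⟨mulLower p q r s, forall_mem_image.2 fun x hx => ?_⟩
  exact mulLower_le_mulLower (hp (mem_image_of_mem u₁ hx)) (h₁ x hx) (hq (mem_image_of_mem v₁ hx))
    (hr (mem_image_of_mem u₂ hx)) (h₂ x hx) (hs (mem_image_of_mem v₂ hx))

end IntervalProduct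

theorem lowerSemicontinuousWithinAt_mulLower {X R : Type*} [TopologicalSpace X]
    [Ring R] [LinearOrder R] [IsStrictOrderedRing R] [DenselyOrdered R]
    [TopologicalSpace R] [OrderTopology R] [IsTopologicalRing R]
    {u₁ v₁ u₂ v₂ : X → R} {s : Set X} {x : X}
    (hu₁ : LowerSemicontinuousWithinAt u₁ s x) (hv₁ : UpperSemicontinuousWithinAt v₁ s x)
    (hu₂ : LowerSemicontinuousWithinAt u₂ s x) (hv₂ : UpperSemicontinuousWithinAt v₂ s x)
    (h₁ : ∀ᶠ y in 𝓝[s] x, u₁ y ≤ v₁ y) (h₂ : ∀ᶠ y in 𝓝[s] x, u₂ y ≤ v₂ y) :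
    LowerSemicontinuousWithinAt (fun y => mulLower (u₁ y) (v₁ y) (u₂ y) (v₂ y)) s x := by
  intro c hc
  have enlarged_continuous :
      Continuous fun ε : R => mulLower (u₁ x - ε) (v₁ x + ε) (u₂ x - ε) (v₂ x + ε) := by
    unfold mulLower
    fun_prop
  have enlarged_eventually_gt :
      ∀ᶠ ε : R in 𝓝 0, c < mulLower (u₁ x - ε) (v₁ x + ε) (u₂ x - ε) (v₂ x + ε) :=
    enlarged_continuous.continuousAt.eventually_const_lt
      (by simpa only [sub_zero, add_zero] using hc)
  obtain ⟨ε, hcε, hε⟩ :=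
    ((enlarged_eventually_gt.filter_mono nhdsWithin_le_nhds).and self_mem_nhdsWithin).exists
      (f := 𝓝[>] (0 : R))
  filter_upwards [hu₁ _ (sub_lt_self _ hε), hv₁ _ (lt_add_of_pos_right _ hε),
    hu₂ _ (sub_lt_self _ hε), hv₂ _ (lt_add_of_pos_right _ hε), h₁, h₂]
    with y hyu₁ hyv₁ hyu₂ hyv₂ hy₁ hy₂
  exact hcε.trans_le (mulLower_le_mulLower hyu₁.le hy₁ hyv₁.le hyu₂.le hy₂ hyv₂.le)

section BaireOperators

variable {X : Type*} [PseudoMetricSpace X]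

/-- Lower Baire operator `I(s, s, f)` on a subset `s` of a pseudometric space. As in `Ilow`, the
infimum over a ball on which `f` is unbounded below takes the junk value `0`. -/
noncomputable def lowerBaire (s : Set X) (f : X → ℝ) (x : X) : ℝ :=
  ⨆ δ : Ioi (0 : ℝ), sInf (f '' (s ∩ ball x δ))

/-- Upper Baire operator `S(s, s, f)` on a subset `s` of a pseudometric space. As in `Shigh`, the
supremum over a ball on which `f` is unbounded above takes the junk value `0`. -/
noncomputable def upperBaire (s : Set X) (f : X → ℝ) (x : X) : ℝ :=
  ⨅ δ : Ioi (0 : ℝ), sSup (f '' (s ∩ ball x δ))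

/-- S-continuity on `s` of the interval-valued function `x ↦ [u x, v x]` on a pseudometric
space, encoded by its two endpoint functions. -/
def IsSContinuousOn (s : Set X) (u v : X → ℝ) : Prop :=
  EqOn (lowerBaire s u) u s ∧ EqOn (upperBaire s v) v s

variable {s t : Set X} {f u v u₁ v₁ u₂ v₂ : X → ℝ} {x : X} {δ : ℝ}

theorem lowerBaire_neg (s : Set X) (f : X → ℝ) (x : X) :
    lowerBaire s (-f) x = -upperBaire s f x := by
  have image_neg_fun (t : Set X) : (-f) '' t = -(f '' t) := by
    rw [← image_neg_eq_neg, image_image]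
    rfl
  simp only [lowerBaire, upperBaire, iSup, iInf, image_neg_fun, Real.sInf_neg]
  rw [← Real.sSup_neg, ← image_neg_eq_neg, ← range_comp]
  rfl

theorem upperBaire_neg (s : Set X) (f : X → ℝ) (x : X) :
    upperBaire s (-f) x = -lowerBaire s f x := by
  rw [← neg_neg f, lowerBaire_neg, neg_neg, neg_neg]

theorem eqOn_lowerBaire_neg_iff :
    EqOn (lowerBaire s (-f)) (-f) s ↔ EqOn (upperBaire s f) f s :=
  forall₂_congr fun x _ => by rw [lowerBaire_neg, Pi.neg_apply, neg_inj]

theorem eqOn_upperBaire_neg_iff :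
    EqOn (upperBaire s (-f)) (-f) s ↔ EqOn (lowerBaire s f) f s :=
  forall₂_congr fun x _ => by rw [upperBaire_neg, Pi.neg_apply, neg_inj]

theorem IsSContinuousOn.neg (h : IsSContinuousOn s u v) : IsSContinuousOn s (-v) (-u) :=
  ⟨eqOn_lowerBaire_neg_iff.2 h.2, eqOn_upperBaire_neg_iff.2 h.1⟩

theorem sInf_image_inter_ball_le_max (hx : x ∈ s) (hδ : 0 < δ) :
    sInf (f '' (s ∩ ball x δ)) ≤ max (f x) 0 := by
  by_cases hb : BddBelow (f '' (s ∩ ball x δ))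
  · exact le_max_of_le_left (csInf_le hb (mem_image_of_mem f ⟨hx, mem_ball_self hδ⟩))
  · exact le_max_of_le_right (Real.sInf_of_not_bddBelow hb).le

theorem sInf_image_inter_ball_le_lowerBaire (hx : x ∈ s) (hδ : 0 < δ) :
    sInf (f '' (s ∩ ball x δ)) ≤ lowerBaire s f x :=
  le_ciSup (f := fun δ : Ioi (0 : ℝ) => sInf (f '' (s ∩ ball x δ)))
    ⟨max (f x) 0, forall_mem_range.2 fun δ => sInf_image_inter_ball_le_max hx δ.2⟩ ⟨δ, hδ⟩

-- If `f` were unbounded below on `t`, every `z ∈ s` would have a ball containing `t`, whose infimum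
-- is the junk value `0`; then `0 ≤ lowerBaire s f z = f z` on all of `s`, a contradiction.
theorem bddBelow_image_of_eqOn_lowerBaire (h : EqOn (lowerBaire s f) f s) (hts : t ⊆ s)
    (ht : IsBounded t) : BddBelow (f '' t) := by
  by_contra hunbdd
  have f_nonneg : ∀ z ∈ s, 0 ≤ f z := by
    intro z hz
    obtain ⟨δ, hδ, htδ⟩ := ht.subset_ball_lt 0 z
    have ball_unbdd : ¬BddBelow (f '' (s ∩ ball z δ)) := fun hb =>
      hunbdd (hb.mono (image_mono (subset_inter hts htδ)))
    calc 0 = sInf (f '' (s ∩ ball z δ)) := (Real.sInf_of_not_bddBelow ball_unbdd).symm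
      _ ≤ lowerBaire s f z := sInf_image_inter_ball_le_lowerBaire hz hδ
      _ = f z := h hz
  exact hunbdd ⟨0, forall_mem_image.2 fun z hz => f_nonneg z (hts hz)⟩

theorem lowerBaire_eq_iff_lowerSemicontinuousWithinAt (hx : x ∈ s)
    (hb : ∀ δ : ℝ, BddBelow (f '' (s ∩ ball x δ))) :
    lowerBaire s f x = f x ↔ LowerSemicontinuousWithinAt f s x := by
  constructor
  · intro h c hc
    rw [← h] at hc
    obtain ⟨⟨δ, hδ⟩, hcδ⟩ := exists_lt_of_lt_ciSup hc
    filter_upwards [inter_mem_nhdsWithin s (ball_mem_nhds x hδ)] with y hy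
    exact hcδ.trans_le (csInf_le (hb δ) (mem_image_of_mem f hy))
  · intro h
    apply le_antisymm
    · exact ciSup_le fun δ => csInf_le (hb δ) (mem_image_of_mem f ⟨hx, mem_ball_self δ.2⟩)
    · refine le_of_forall_lt_imp_le_of_dense fun c hc => ?_
      obtain ⟨δ, hδ, hcδ⟩ := Metric.mem_nhdsWithin_iff.1 (h c hc)
      calc c ≤ sInf (f '' (s ∩ ball x δ)) :=
            le_csInf ⟨f x, mem_image_of_mem f ⟨hx, mem_ball_self hδ⟩⟩
              (forall_mem_image.2 fun y hy => (hcδ hy.symm).le)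
        _ ≤ lowerBaire s f x := sInf_image_inter_ball_le_lowerBaire hx hδ

theorem eqOn_lowerBaire_iff :
    EqOn (lowerBaire s f) f s ↔
      LowerSemicontinuousOn f s ∧ ∀ t ⊆ s, IsBounded t → BddBelow (f '' t) := by
  have inter_ball_bdd (x : X) (δ : ℝ) : IsBounded (s ∩ ball x δ) :=
    isBounded_ball.subset inter_subset_right
  constructor
  · intro h
    have hb t (hts : t ⊆ s) (ht : IsBounded t) := bddBelow_image_of_eqOn_lowerBaire h hts ht
    exact ⟨fun x hx => (lowerBaire_eq_iff_lowerSemicontinuousWithinAt hx fun δ =>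
      hb _ inter_subset_left (inter_ball_bdd x δ)).1 (h hx), hb⟩
  · rintro ⟨hf, hb⟩ x hx
    exact (lowerBaire_eq_iff_lowerSemicontinuousWithinAt hx fun δ =>
      hb _ inter_subset_left (inter_ball_bdd x δ)).2 (hf x hx)

theorem upperSemicontinuousOn_of_eqOn_upperBaire (h : EqOn (upperBaire s f) f s) :
    UpperSemicontinuousOn f s := by
  have hneg := (eqOn_lowerBaire_iff.1 (eqOn_lowerBaire_neg_iff.2 h)).1
  simpa only [Function.comp_def, Pi.neg_apply, neg_neg] using
    continuous_neg.comp_lowerSemicontinuousOn_antitone hneg fun _ _ => neg_le_neg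

theorem bddAbove_image_of_eqOn_upperBaire (h : EqOn (upperBaire s f) f s) (hts : t ⊆ s)
    (ht : IsBounded t) : BddAbove (f '' t) := by
  have hneg := bddBelow_image_of_eqOn_lowerBaire (eqOn_lowerBaire_neg_iff.2 h) hts ht
  rwa [← bddBelow_neg, ← image_neg_eq_neg, image_image]

theorem IsSContinuousOn.eqOn_lowerBaire_mulLower
    (hf : IsSContinuousOn s u₁ v₁) (hg : IsSContinuousOn s u₂ v₂)
    (h₁ : ∀ x ∈ s, u₁ x ≤ v₁ x) (h₂ : ∀ x ∈ s, u₂ x ≤ v₂ x) :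
    EqOn (lowerBaire s fun x => mulLower (u₁ x) (v₁ x) (u₂ x) (v₂ x))
      (fun x => mulLower (u₁ x) (v₁ x) (u₂ x) (v₂ x)) s := by
  obtain ⟨hu₁, bu₁⟩ := eqOn_lowerBaire_iff.1 hf.1
  obtain ⟨hu₂, bu₂⟩ := eqOn_lowerBaire_iff.1 hg.1
  have hv₁ := upperSemicontinuousOn_of_eqOn_upperBaire hf.2
  have hv₂ := upperSemicontinuousOn_of_eqOn_upperBaire hg.2
  refine eqOn_lowerBaire_iff.2 ⟨fun x hx => ?_, fun t hts ht => ?_⟩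
  · exact lowerSemicontinuousWithinAt_mulLower (hu₁ x hx) (hv₁ x hx) (hu₂ x hx) (hv₂ x hx)
      (eventually_nhdsWithin_of_forall h₁) (eventually_nhdsWithin_of_forall h₂)
  · exact bddBelow_image_mulLower (bu₁ t hts ht) (bddAbove_image_of_eqOn_upperBaire hf.2 hts ht)
      (bu₂ t hts ht) (bddAbove_image_of_eqOn_upperBaire hg.2 hts ht)
      (fun x hx => h₁ x (hts hx)) (fun x hx => h₂ x (hts hx))

theorem stmt6_general (hf : IsSContinuousOn s u₁ v₁) (hg : IsSContinuousOn s u₂ v₂)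
    (h₁ : ∀ x ∈ s, u₁ x ≤ v₁ x) (h₂ : ∀ x ∈ s, u₂ x ≤ v₂ x) :
    IsSContinuousOn s (fun x => mulLower (u₁ x) (v₁ x) (u₂ x) (v₂ x))
      (fun x => mulUpper (u₁ x) (v₁ x) (u₂ x) (v₂ x)) := by
  refine ⟨hf.eqOn_lowerBaire_mulLower hg h₁ h₂, eqOn_lowerBaire_neg_iff.1 ?_⟩
  have lower_neg := hf.neg.eqOn_lowerBaire_mulLower hg (fun x hx => neg_le_neg (h₁ x hx)) h₂
  simpa only [Pi.neg_def, mulLower_neg_neg] using lower_neg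

end BaireOperators

section Euclidean

variable {n : ℕ}

theorem setOf_norm_sub_lt_eq_inter_ball (D Om : Set (Pt n)) (x : Pt n) (δ : ℝ) :
    {y | y ∈ Om ∧ ‖y - x‖ < δ ∧ y ∈ D} = Om ∩ D ∩ ball x δ := by
  ext y
  rw [mem_inter_iff, mem_inter_iff, mem_ball_iff_norm, and_assoc, and_comm (a := y ∈ D)]
  rfl

theorem Ilow_eq_lowerBaire (D Om : Set (Pt n)) (f : Pt n → ℝ) (x : Pt n) :
    Ilow D Om f x = lowerBaire (Om ∩ D) f x := by
  simp only [Ilow, setOf_norm_sub_lt_eq_inter_ball, lowerBaire, iSup]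
  congr 1
  ext a
  simp [eq_comm]

theorem Shigh_eq_upperBaire (D Om : Set (Pt n)) (f : Pt n → ℝ) (x : Pt n) :
    Shigh D Om f x = upperBaire (Om ∩ D) f x := by
  simp only [Shigh, setOf_norm_sub_lt_eq_inter_ball, upperBaire, iInf]
  congr 1
  ext a
  simp [eq_comm]

theorem sCont_iff_isSContinuousOn {Om : Set (Pt n)} {u v : Pt n → ℝ} :
    SCont Om u v ↔ IsSContinuousOn Om u v := by
  simp only [SCont, IsSContinuousOn, EqOn, Ilow_eq_lowerBaire, Shigh_eq_upperBaire, inter_self,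
    ← forall₂_and]

end Euclidean

theorem stmt6 {n : ℕ} (Om : Set (Pt n)) (u₁ v₁ u₂ v₂ : Pt n → ℝ)
    (h₁ : IntervalPair Om u₁ v₁) (h₂ : IntervalPair Om u₂ v₂)
    (s₁ : SCont Om u₁ v₁) (s₂ : SCont Om u₂ v₂) :
    SCont Om (imin u₁ v₁ u₂ v₂) (imax u₁ v₁ u₂ v₂) := by
  rw [sCont_iff_isSContinuousOn] at s₁ s₂ ⊢
  exact stmt6_general s₁ s₂ h₁.2.2 h₂.2.2
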